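/- arXiv:1608.05973 — 5 statements merged into one kernel-verified Lean document; each statement's English description precedes it below -/
import Mathlib

section
/- Let d ≥ 1, let H : ℝ^d → ℝ be smooth, let D : ℝ^d → (d×d real matrices) be a smooth matrix-valued map with D(z) symmetric for every z, and let Q : ℝ^d → (d×d real matrices) be a smooth matrix-valued map with Q(z) skew-symmetric (Q(z)ᵀ = -Q(z)) for every z. Define the drift f : ℝ^d → ℝ^d by f_i(z) = -∑_{j=1}^d (D_{ij}(z) + Q_{ij}(z)) ∂H/∂z_j (z) + ∑_{j=1}^d ∂/∂z_j (D_{ij}(z) + Q_{ij}(z)). Then for every smooth function p : ℝ^d → ℝ and every z ∈ ℝ^d, the Itô Fokker–Planck right-hand side equals the compact form: ∑_{i,j=1}^d ∂²/∂z_i∂z_j [D_{ij}(z) p(z)] - ∑_{i=1}^d ∂/∂z_i [f_i(z) p(z)] = ∑_{i=1}^d ∂/∂z_i ( ∑_{j=1}^d (D_{ij}(z) + Q_{ij}(z)) [ p(z) ∂H/∂z_j(z) + ∂p/∂z_j(z) ] ). -/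
open scoped BigOperators
open Matrix

/-- Classical partial derivative in the `i`-th coordinate direction. -/
noncomputable def pd {ι : Type*} [Fintype ι] [DecidableEq ι]
    (i : ι) (f : (ι → ℝ) → ℝ) (z : ι → ℝ) : ℝ :=
  fderiv ℝ f z (Pi.single i 1)

theorem pd_smooth {d : ℕ} (i : Fin d) {g : (Fin d → ℝ) → ℝ} (hg : ContDiff ℝ (⊤ : ℕ∞) g) :
    ContDiff ℝ (⊤ : ℕ∞) (fun w => pd i g w) := by
  unfold pd
  exact (hg.fderiv_right (m := ((⊤ : ℕ∞) : WithTop ℕ∞)) (by simp)).clm_apply contDiff_const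

theorem smooth_diff {d : ℕ} {g : (Fin d → ℝ) → ℝ} (hg : ContDiff ℝ (⊤ : ℕ∞) g) :
    Differentiable ℝ g := hg.differentiable (by simp)

theorem pd_add {d : ℕ} (i : Fin d) {g h : (Fin d → ℝ) → ℝ} (hg : ContDiff ℝ (⊤ : ℕ∞) g)
    (hh : ContDiff ℝ (⊤ : ℕ∞) h) (z : Fin d → ℝ) :
    pd i (fun w => g w + h w) z = pd i g z + pd i h z := by
  unfold pd
  rw [fderiv_fun_add (smooth_diff hg z) (smooth_diff hh z)]
  rfl

theorem pd_sub {d : ℕ} (i : Fin d) {g h : (Fin d → ℝ) → ℝ} (hg : ContDiff ℝ (⊤ : ℕ∞) g)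
    (hh : ContDiff ℝ (⊤ : ℕ∞) h) (z : Fin d → ℝ) :
    pd i (fun w => g w - h w) z = pd i g z - pd i h z := by
  unfold pd
  rw [fderiv_fun_sub (smooth_diff hg z) (smooth_diff hh z)]
  rfl

theorem pd_neg {d : ℕ} (i : Fin d) (g : (Fin d → ℝ) → ℝ) (z : Fin d → ℝ) :
    pd i (fun w => - g w) z = - pd i g z := by
  unfold pd
  rw [fderiv_fun_neg]
  rfl

theorem pd_mul {d : ℕ} (i : Fin d) {g h : (Fin d → ℝ) → ℝ} (hg : ContDiff ℝ (⊤ : ℕ∞) g)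
    (hh : ContDiff ℝ (⊤ : ℕ∞) h) (z : Fin d → ℝ) :
    pd i (fun w => g w * h w) z = g z * pd i h z + h z * pd i g z := by
  unfold pd
  rw [fderiv_fun_mul (smooth_diff hg z) (smooth_diff hh z)]
  rfl

theorem pd_sum {d : ℕ} (i : Fin d) {g : Fin d → (Fin d → ℝ) → ℝ}
    (hg : ∀ j, ContDiff ℝ (⊤ : ℕ∞) (g j)) (z : Fin d → ℝ) :
    pd i (fun w => ∑ j, g j w) z = ∑ j, pd i (g j) z := by
  unfold pd
  rw [fderiv_fun_sum (fun j _ => smooth_diff (hg j) z)]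
  simp

theorem pd_comm {d : ℕ} (i j : Fin d) {g : (Fin d → ℝ) → ℝ} (hg : ContDiff ℝ (⊤ : ℕ∞) g)
    (z : Fin d → ℝ) :
    pd i (fun w => pd j g w) z = pd j (fun w => pd i g w) z := by
  have hs : IsSymmSndFDerivAt ℝ g z :=
    hg.contDiffAt.isSymmSndFDerivAt (by simp; exact WithTop.coe_le_coe.2 le_top)
  have hd : DifferentiableAt ℝ (fderiv ℝ g) z :=
    (hg.fderiv_right (m := ((⊤ : ℕ∞) : WithTop ℕ∞)) (by simp)).differentiable (by simp) z
  have key : ∀ a b : Fin d, pd a (fun w => pd b g w) z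
      = fderiv ℝ (fderiv ℝ g) z (Pi.single a 1) (Pi.single b 1) := by
    intro a b
    unfold pd
    rw [fderiv_clm_apply hd (differentiableAt_const _)]
    simp
  rw [key, key]
  exact hs _ _

/-- The Itô Fokker–Planck right-hand side for the complete-recipe drift equals
the compact divergence form. -/
theorem fokker_planck_compact_form {d : ℕ} (hd : 1 ≤ d)
    (H : (Fin d → ℝ) → ℝ) (hH : ContDiff ℝ (⊤ : ℕ∞) H)
    (D Q : (Fin d → ℝ) → Matrix (Fin d) (Fin d) ℝ)
    (hD : ∀ i j, ContDiff ℝ (⊤ : ℕ∞) (fun z => D z i j))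
    (hDsymm : ∀ z, (D z)ᵀ = D z)
    (hQ : ∀ i j, ContDiff ℝ (⊤ : ℕ∞) (fun z => Q z i j))
    (hQskew : ∀ z, (Q z)ᵀ = -Q z)
    (f : (Fin d → ℝ) → Fin d → ℝ)
    (hf : ∀ z i, f z i =
      -∑ j, (D z i j + Q z i j) * pd j H z
        + ∑ j, pd j (fun w => D w i j + Q w i j) z)
    (p : (Fin d → ℝ) → ℝ) (hp : ContDiff ℝ (⊤ : ℕ∞) p) (z : Fin d → ℝ) :
    ∑ i, ∑ j, pd i (fun w => pd j (fun u => D u i j * p u) w) z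
      - ∑ i, pd i (fun w => f w i * p w) z
    = ∑ i, pd i (fun w =>
        ∑ j, (D w i j + Q w i j) * (p w * pd j H w + pd j p w)) z := by
  have hA : ∀ i j, ContDiff ℝ (⊤ : ℕ∞) (fun u => D u i j * p u) := fun i j => (hD i j).mul hp
  have hB : ∀ i j, ContDiff ℝ (⊤ : ℕ∞) (fun u => Q u i j * p u) := fun i j => (hQ i j).mul hp
  have hfs : ∀ i, ContDiff ℝ (⊤ : ℕ∞) (fun w => f w i) := by
    intro i
    simp only [hf]
    exact (ContDiff.sum fun j _ => ((hD i j).add (hQ i j)).mul (pd_smooth j hH)).neg.add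
      (ContDiff.sum fun j _ => pd_smooth j ((hD i j).add (hQ i j)))
  have hpt : ∀ i, (fun w => ∑ j, (D w i j + Q w i j) * (p w * pd j H w + pd j p w))
      = fun w => ((∑ j, pd j (fun u => D u i j * p u) w) - f w i * p w)
        + ∑ j, pd j (fun u => Q u i j * p u) w := by
    intro i
    funext w
    rw [hf, add_mul, neg_mul, Finset.sum_mul, Finset.sum_mul, sub_eq_add_neg, neg_add, neg_neg,
      ← Finset.sum_neg_distrib, ← Finset.sum_add_distrib, ← Finset.sum_add_distrib,
      ← Finset.sum_add_distrib]
    refine Finset.sum_congr rfl fun j _ => ?_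
    rw [pd_mul j (hD i j) hp, pd_mul j (hQ i j) hp, pd_add j (hD i j) (hQ i j)]
    ring
  have hanti : ∑ i, ∑ j, pd i (fun w => pd j (fun u => Q u i j * p u) w) z = 0 := by
    have h1 : ∑ i, ∑ j, pd i (fun w => pd j (fun u => Q u i j * p u) w) z
        = - ∑ i, ∑ j, pd i (fun w => pd j (fun u => Q u i j * p u) w) z := by
      conv_lhs => rw [Finset.sum_comm]
      rw [← Finset.sum_neg_distrib]
      refine Finset.sum_congr rfl fun i _ => ?_
      rw [← Finset.sum_neg_distrib]
      refine Finset.sum_congr rfl fun j _ => ?_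
      rw [pd_comm j i (hB j i)]
      have : (fun u => Q u j i * p u) = fun u => -(Q u i j * p u) := by
        funext u
        have := congrFun (congrFun (hQskew u) i) j
        simp only [Matrix.transpose_apply, Matrix.neg_apply] at this
        rw [this, neg_mul]
      rw [this]
      simp only [pd_neg]
    linarith
  have hi : ∀ i, pd i (fun w => ∑ j, (D w i j + Q w i j) * (p w * pd j H w + pd j p w)) z
      = (∑ j, pd i (fun w => pd j (fun u => D u i j * p u) w) z - pd i (fun w => f w i * p w) z)
        + ∑ j, pd i (fun w => pd j (fun u => Q u i j * p u) w) z := by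
    intro i
    have s1 : ContDiff ℝ (⊤ : ℕ∞) (fun w => ∑ j, pd j (fun u => D u i j * p u) w) :=
      ContDiff.sum fun j _ => pd_smooth j (hA i j)
    have s2 : ContDiff ℝ (⊤ : ℕ∞) (fun w => ∑ j, pd j (fun u => Q u i j * p u) w) :=
      ContDiff.sum fun j _ => pd_smooth j (hB i j)
    rw [hpt, pd_add i (s1.sub ((hfs i).mul hp)) s2, pd_sub i s1 ((hfs i).mul hp),
      pd_sum i (fun j => pd_smooth j (hA i j)), pd_sum i (fun j => pd_smooth j (hB i j))]
  rw [Finset.sum_congr rfl fun i _ => hi i, Finset.sum_add_distrib, Finset.sum_sub_distrib, hanti,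
    add_zero]
end

section
/- Let d ≥ 1, let H : ℝ^d → ℝ be smooth, let D : ℝ^d → (d×d real matrices) be smooth with D(z) symmetric for every z, and let Q : ℝ^d → (d×d real matrices) be smooth with Q(z) skew-symmetric for every z. Define f_i(z) = -∑_{j=1}^d (D_{ij}(z) + Q_{ij}(z)) ∂H/∂z_j(z) + ∑_{j=1}^d ∂/∂z_j (D_{ij}(z) + Q_{ij}(z)). Then π(z) = exp(-H(z)) is a stationary solution of the Fokker–Planck equation: for every z ∈ ℝ^d, ∑_{i,j=1}^d ∂²/∂z_i∂z_j [D_{ij}(z) e^{-H(z)}] - ∑_{i=1}^d ∂/∂z_i [f_i(z) e^{-H(z)}] = 0. -/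
open scoped BigOperators
open Matrix

theorem pd_add_aux {d : ℕ} (i : Fin d) (f g : (Fin d → ℝ) → ℝ)
    (hf : Differentiable ℝ f) (hg : Differentiable ℝ g) (z : Fin d → ℝ) :
    pd i (fun w => f w + g w) z = pd i f z + pd i g z := by
  unfold pd
  rw [fderiv_fun_add (hf z) (hg z)]
  rfl

theorem pd_sum_aux {d : ℕ} (i : Fin d) (F : Fin d → (Fin d → ℝ) → ℝ)
    (hF : ∀ j, Differentiable ℝ (F j)) (z : Fin d → ℝ) :
    pd i (fun w => ∑ j, F j w) z = ∑ j, pd i (F j) z := by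
  unfold pd
  rw [fderiv_fun_sum (fun j _ => hF j z)]
  simp

theorem pd_mul_exp_aux {d : ℕ} (i : Fin d) (f H : (Fin d → ℝ) → ℝ)
    (hf : Differentiable ℝ f) (hH : Differentiable ℝ H) (z : Fin d → ℝ) :
    pd i (fun w => f w * Real.exp (-H w)) z
      = (-(f z * pd i H z) + pd i f z) * Real.exp (-H z) := by
  have h : HasFDerivAt (fun w => f w * Real.exp (-H w)) _ z :=
    (hf z).hasFDerivAt.mul ((hH z).hasFDerivAt.neg.exp)
  unfold pd
  rw [h.fderiv]
  simp
  ring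

theorem pd_smooth_aux {d : ℕ} (i : Fin d) (f : (Fin d → ℝ) → ℝ)
    (hf : ContDiff ℝ (⊤ : ℕ∞) f) : ContDiff ℝ (⊤ : ℕ∞) (fun z => pd i f z) := by
  unfold pd
  exact (hf.fderiv_right (m := ((⊤ : ℕ∞) : WithTop ℕ∞)) (by simp)).clm_apply contDiff_const

theorem pd_comm_aux {d : ℕ} (i j : Fin d) (f : (Fin d → ℝ) → ℝ)
    (hf : ContDiff ℝ (⊤ : ℕ∞) f) (z : Fin d → ℝ) :
    pd i (fun w => pd j f w) z = pd j (fun w => pd i f w) z := by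
  have hd : Differentiable ℝ (fderiv ℝ f) :=
    (hf.fderiv_right (m := ((⊤ : ℕ∞) : WithTop ℕ∞)) (by simp)).differentiable (by simp)
  have key : ∀ a b : Fin d, pd a (fun w => pd b f w) z
      = fderiv ℝ (fderiv ℝ f) z (Pi.single a 1) (Pi.single b 1) := by
    intro a b
    unfold pd
    rw [fderiv_clm_apply (hd z) (differentiableAt_const _)]
    simp
  rw [key, key]
  exact (hf.contDiffAt.isSymmSndFDerivAt (by
    simp only [minSmoothness_of_isRCLikeNormedField]
    exact WithTop.coe_le_coe.mpr (le_top : (2 : ℕ∞) ≤ ⊤))) _ _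

/-- `π(z) = exp(-H(z))` is a stationary solution of the Fokker–Planck equation
associated with the complete-recipe drift. -/
theorem exp_neg_H_stationary {d : ℕ} (hd : 1 ≤ d)
    (H : (Fin d → ℝ) → ℝ) (hH : ContDiff ℝ (⊤ : ℕ∞) H)
    (D Q : (Fin d → ℝ) → Matrix (Fin d) (Fin d) ℝ)
    (hD : ∀ i j, ContDiff ℝ (⊤ : ℕ∞) (fun z => D z i j))
    (hDsymm : ∀ z, (D z)ᵀ = D z)
    (hQ : ∀ i j, ContDiff ℝ (⊤ : ℕ∞) (fun z => Q z i j))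
    (hQskew : ∀ z, (Q z)ᵀ = -Q z)
    (f : (Fin d → ℝ) → Fin d → ℝ)
    (hf : ∀ z i, f z i =
      -∑ j, (D z i j + Q z i j) * pd j H z
        + ∑ j, pd j (fun w => D w i j + Q w i j) z)
    (z : Fin d → ℝ) :
    ∑ i, ∑ j, pd i (fun w => pd j (fun u => D u i j * Real.exp (-H u)) w) z
      - ∑ i, pd i (fun w => f w i * Real.exp (-H w)) z = 0 := by
  have hne : ((⊤ : ℕ∞) : WithTop ℕ∞) ≠ 0 := by simp
  have hE : ContDiff ℝ (⊤ : ℕ∞) (fun u => Real.exp (-H u)) := hH.neg.exp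
  have hDE : ∀ i j, ContDiff ℝ (⊤ : ℕ∞) (fun u => D u i j * Real.exp (-H u)) :=
    fun i j => (hD i j).mul hE
  have hQE : ∀ i j, ContDiff ℝ (⊤ : ℕ∞) (fun u => Q u i j * Real.exp (-H u)) :=
    fun i j => (hQ i j).mul hE
  -- the probability flux is a divergence
  have hflux : ∀ i, (fun w => f w i * Real.exp (-H w)) = fun w => ∑ j,
      (pd j (fun u => D u i j * Real.exp (-H u)) w
        + pd j (fun u => Q u i j * Real.exp (-H u)) w) := by
    intro i
    funext w
    rw [hf, ← Finset.sum_neg_distrib, ← Finset.sum_add_distrib, Finset.sum_mul]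
    refine Finset.sum_congr rfl fun j _ => ?_
    have hDd := (hD i j).differentiable hne
    have hQd := (hQ i j).differentiable hne
    have hHd := hH.differentiable hne
    rw [pd_mul_exp_aux j (fun u => D u i j) H hDd hHd,
      pd_mul_exp_aux j (fun u => Q u i j) H hQd hHd,
      pd_add_aux j (fun u => D u i j) (fun u => Q u i j) hDd hQd]
    ring
  have hdiv : ∀ i, pd i (fun w => f w i * Real.exp (-H w)) z
      = ∑ j, pd i (fun w => pd j (fun u => D u i j * Real.exp (-H u)) w) z
        + ∑ j, pd i (fun w => pd j (fun u => Q u i j * Real.exp (-H u)) w) z := by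
    intro i
    have h1 := fun j => (pd_smooth_aux j _ (hDE i j)).differentiable hne
    have h2 := fun j => (pd_smooth_aux j _ (hQE i j)).differentiable hne
    rw [hflux, ← Finset.sum_add_distrib]
    refine (pd_sum_aux i _ (fun j => (h1 j).add (h2 j)) z).trans ?_
    exact Finset.sum_congr rfl fun j _ => pd_add_aux i _ _ (h1 j) (h2 j) z
  -- the skew part vanishes
  have hneg : ∀ i j, pd i (fun w => pd j (fun u => Q u i j * Real.exp (-H u)) w) z
      = -pd j (fun w => pd i (fun u => Q u j i * Real.exp (-H u)) w) z := by
    intro i j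
    rw [pd_comm_aux i j _ (hQE i j)]
    have hq : (fun u => Q u i j * Real.exp (-H u))
        = fun u => -(Q u j i * Real.exp (-H u)) := by
      funext u
      have := congrFun (congrFun (hQskew u) j) i
      simp only [Matrix.transpose_apply, Matrix.neg_apply] at this
      rw [this]
      ring
    rw [hq]
    unfold pd
    simp only [fderiv_fun_neg, _root_.neg_apply]
  have hzero : ∑ i, ∑ j, pd i (fun w => pd j (fun u => Q u i j * Real.exp (-H u)) w) z = 0 := by
    have h : ∑ i, ∑ j, pd i (fun w => pd j (fun u => Q u i j * Real.exp (-H u)) w) z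
        = -∑ i, ∑ j, pd i (fun w => pd j (fun u => Q u i j * Real.exp (-H u)) w) z := by
      conv_lhs => rw [Finset.sum_comm]
      simp only [← Finset.sum_neg_distrib]
      exact Finset.sum_congr rfl fun i _ => Finset.sum_congr rfl fun j _ => hneg j i
    linarith
  simp only [hdiv, Finset.sum_add_distrib, hzero]
  ring
end

section
/- Let d ≥ 1 and let F : ℝ^d → ℝ^d be a smooth vector field such that each component F_i is Lebesgue integrable on ℝ^d and F is divergence-free: ∑_{i=1}^d ∂F_i/∂z_i (z) = 0 for every z ∈ ℝ^d. Then there exists a smooth matrix-valued map A : ℝ^d → (d×d real matrices) with A(z) skew-symmetric (A_{ij}(z) = -A_{ji}(z)) for every z, such that F is the row-divergence of A: for every i and every z ∈ ℝ^d, F_i(z) = ∑_{j=1}^d ∂A_{ij}/∂z_j (z). -/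
open scoped BigOperators
open MeasureTheory

/-- Differentiation under the integral sign on `[0,1]`, for smooth integrands. -/
theorem hasFDerivAt_param {d : ℕ} (f : (Fin d → ℝ) × ℝ → ℝ) (hf : ContDiff ℝ (⊤ : ℕ∞) f)
    (x : Fin d → ℝ) :
    HasFDerivAt (fun x => ∫ t in (0:ℝ)..1, f (x, t))
      (∫ t in (0:ℝ)..1, (fderiv ℝ f (x, t)).comp (ContinuousLinearMap.inl ℝ (Fin d → ℝ) ℝ)) x := by
  have hc : Continuous f := hf.continuous
  have hc' : Continuous (fun p : (Fin d → ℝ) × ℝ =>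
      (fderiv ℝ f p).comp (ContinuousLinearMap.inl ℝ (Fin d → ℝ) ℝ)) :=
    (hf.continuous_fderiv (by simp)).clm_comp continuous_const
  have hK : IsCompact (Metric.closedBall x 1 ×ˢ Set.Icc (0:ℝ) 1) :=
    (isCompact_closedBall x 1).prod isCompact_Icc
  obtain ⟨C, hC⟩ := hK.exists_bound_of_continuousOn hc'.continuousOn
  refine intervalIntegral.hasFDerivAt_integral_of_dominated_of_fderiv_le
    (F := fun x t => f (x, t))
    (F' := fun x t => (fderiv ℝ f (x, t)).comp (ContinuousLinearMap.inl ℝ (Fin d → ℝ) ℝ))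
    (bound := fun _ => C)
    (Metric.closedBall_mem_nhds x one_pos) ?_ ?_ ?_ ?_ ?_ ?_
  · refine Filter.Eventually.of_forall fun y => ?_
    exact (hc.comp (by fun_prop : Continuous fun t : ℝ => (y, t))).aestronglyMeasurable
  · exact (hc.comp (by fun_prop : Continuous fun t : ℝ => (x, t))).intervalIntegrable _ _
  · exact (hc'.comp (by fun_prop : Continuous fun t : ℝ => (x, t))).aestronglyMeasurable
  · refine Filter.Eventually.of_forall fun t ht y hy => hC (y, t) ⟨hy, ?_⟩
    rw [Set.uIoc_of_le zero_le_one] at ht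
    exact Set.Ioc_subset_Icc_self ht
  · exact intervalIntegrable_const
  · refine Filter.Eventually.of_forall fun t _ y _ => ?_
    have h1 : HasFDerivAt f (fderiv ℝ f (y, t)) (y, t) :=
      (hf.differentiable (by simp) _).hasFDerivAt
    exact h1.comp y (hasFDerivAt_prodMk_left y t)

theorem fderiv_param_apply {d : ℕ} (f : (Fin d → ℝ) × ℝ → ℝ) (hf : ContDiff ℝ (⊤ : ℕ∞) f)
    (x v : Fin d → ℝ) :
    fderiv ℝ (fun x => ∫ t in (0:ℝ)..1, f (x, t)) x v
      = ∫ t in (0:ℝ)..1, fderiv ℝ f (x, t) (v, 0) := by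
  have hc' : Continuous (fun p : (Fin d → ℝ) × ℝ =>
      (fderiv ℝ f p).comp (ContinuousLinearMap.inl ℝ (Fin d → ℝ) ℝ)) :=
    (hf.continuous_fderiv (by simp)).clm_comp continuous_const
  rw [(hasFDerivAt_param f hf x).fderiv, ContinuousLinearMap.intervalIntegral_apply]
  · simp
  · exact (hc'.comp (by fun_prop : Continuous fun t : ℝ => (x, t))).intervalIntegrable _ _

theorem contDiff_param_nat {d : ℕ} (n : ℕ) : ∀ (f : (Fin d → ℝ) × ℝ → ℝ),
    ContDiff ℝ (⊤ : ℕ∞) f → ContDiff ℝ n (fun x => ∫ t in (0:ℝ)..1, f (x, t)) := by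
  induction n with
  | zero =>
    intro f hf
    refine contDiff_zero.2 (Differentiable.continuous (𝕜 := ℝ) fun x =>
      (hasFDerivAt_param f hf x).differentiableAt)
  | succ n ih =>
    intro f hf
    push_cast
    rw [contDiff_succ_iff_fderiv_apply]
    refine ⟨fun x => (hasFDerivAt_param f hf x).differentiableAt, by simp, fun v => ?_⟩
    simp_rw [fderiv_param_apply f hf]
    refine ih (fun p => fderiv ℝ f p (v, 0)) ?_
    exact (hf.fderiv_right (m := ((⊤ : ℕ∞) : WithTop ℕ∞)) (by simp)).clm_apply contDiff_const

theorem contDiff_param {d : ℕ} (f : (Fin d → ℝ) × ℝ → ℝ) (hf : ContDiff ℝ (⊤ : ℕ∞) f) :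
    ContDiff ℝ (⊤ : ℕ∞) (fun x => ∫ t in (0:ℝ)..1, f (x, t)) :=
  contDiff_infty.2 fun n => contDiff_param_nat n f hf

/-- The radial average of a function. -/
noncomputable def radial {d : ℕ} (n : ℕ) (g : (Fin d → ℝ) → ℝ) (x : Fin d → ℝ) : ℝ :=
  ∫ t in (0:ℝ)..1, t ^ n * g (t • x)

theorem contDiff_integrand {d : ℕ} (n : ℕ) (g : (Fin d → ℝ) → ℝ) (hg : ContDiff ℝ (⊤ : ℕ∞) g) :
    ContDiff ℝ (⊤ : ℕ∞) (fun p : (Fin d → ℝ) × ℝ => p.2 ^ n * g (p.2 • p.1)) :=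
  (contDiff_snd.pow n).mul (hg.comp (contDiff_snd.smul contDiff_fst))

theorem contDiff_radial {d : ℕ} (n : ℕ) (g : (Fin d → ℝ) → ℝ) (hg : ContDiff ℝ (⊤ : ℕ∞) g) :
    ContDiff ℝ (⊤ : ℕ∞) (radial n g) :=
  contDiff_param _ (contDiff_integrand n g hg)

theorem fderiv_radial {d : ℕ} (n : ℕ) (g : (Fin d → ℝ) → ℝ) (hg : ContDiff ℝ (⊤ : ℕ∞) g)
    (x v : Fin d → ℝ) :
    fderiv ℝ (radial n g) x v = ∫ t in (0:ℝ)..1, t ^ (n + 1) * fderiv ℝ g (t • x) v := by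
  have h := fderiv_param_apply _ (contDiff_integrand n g hg) x v
  refine h.trans (intervalIntegral.integral_congr fun t _ => ?_)
  have h1 : HasFDerivAt g (fderiv ℝ g (t • x)) (t • x) :=
    (hg.differentiable (by simp) _).hasFDerivAt
  have h2 : HasFDerivAt (fun y : Fin d → ℝ => t ^ n * g (t • y))
      (t ^ n • (fderiv ℝ g (t • x)).comp (t • ContinuousLinearMap.id ℝ (Fin d → ℝ))) x :=
    (h1.comp x ((hasFDerivAt_id x).const_smul t)).const_mul _
  have h3 : HasFDerivAt (fun p : (Fin d → ℝ) × ℝ => p.2 ^ n * g (p.2 • p.1)) _ (x, t) :=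
    ((contDiff_integrand n g hg).differentiable (by simp) (x, t)).hasFDerivAt
  have h6 := h3.comp x (hasFDerivAt_prodMk_left (𝕜 := ℝ) x t)
  have h4 := h2.unique h6
  have h5 := congrArg (fun L => L v) h4
  simp at h5
  simp only [← h5]
  ring

theorem radial_euler {d : ℕ} (n : ℕ) (g : (Fin d → ℝ) → ℝ) (hg : ContDiff ℝ (⊤ : ℕ∞) g)
    (x : Fin d → ℝ) :
    (n + 1 : ℝ) * radial n g x + fderiv ℝ (radial n g) x x = g x := by
  have hc : Continuous g := hg.continuous
  have hc' : Continuous (fderiv ℝ g) := hg.continuous_fderiv (by simp)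
  have i1 : Continuous (fun t : ℝ => (n + 1 : ℝ) * (t ^ n * g (t • x))) := by fun_prop
  have i2 : Continuous (fun t : ℝ => t ^ (n + 1) * fderiv ℝ g (t • x) x) := by fun_prop
  rw [fderiv_radial n g hg, radial, ← intervalIntegral.integral_const_mul,
    ← intervalIntegral.integral_add (i1.intervalIntegrable _ _) (i2.intervalIntegrable _ _)]
  rw [intervalIntegral.integral_eq_sub_of_hasDerivAt (f := fun t : ℝ => t ^ (n + 1) * g (t • x))]
  · simp
  · intro t _
    have h1 : HasFDerivAt g (fderiv ℝ g (t • x)) (t • x) :=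
      (hg.differentiable (by simp) _).hasFDerivAt
    have h2 : HasDerivAt (fun t : ℝ => g (t • x)) (fderiv ℝ g (t • x) x) t := by
      have := h1.comp_hasDerivAt t ((hasDerivAt_id t).smul_const x)
      rw [one_smul] at this
      exact this
    have h3 := (hasDerivAt_pow (n + 1) t).mul h2
    refine HasDerivAt.congr_deriv h3 ?_
    push_cast
    ring
  · exact (i1.add i2).intervalIntegrable _ _

/-- An integrable smooth divergence-free vector field on ℝ^d is the row-divergence
of a smooth skew-symmetric matrix-valued potential. -/
theorem divergence_free_eq_div_of_skew {d : ℕ} (hd : 1 ≤ d)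
    (F : (Fin d → ℝ) → Fin d → ℝ)
    (hF : ∀ i, ContDiff ℝ (⊤ : ℕ∞) (fun z => F z i))
    (hInt : ∀ i, Integrable (fun z => F z i) (volume : Measure (Fin d → ℝ)))
    (hdiv : ∀ z : Fin d → ℝ, ∑ i, pd i (fun w => F w i) z = 0) :
    ∃ A : (Fin d → ℝ) → Matrix (Fin d) (Fin d) ℝ,
      (∀ i j, ContDiff ℝ (⊤ : ℕ∞) (fun z => A z i j)) ∧
      (∀ z i j, A z i j = -A z j i) ∧
      (∀ i (z : Fin d → ℝ), F z i = ∑ j, pd j (fun w => A w i j) z) := by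
  obtain rfl | ⟨n, rfl⟩ : d = 1 ∨ ∃ n, d = n + 2 := by
    rcases d with _ | _ | n
    · omega
    · exact Or.inl rfl
    · exact Or.inr ⟨n, rfl⟩
  · refine ⟨fun _ => 0, fun i j => by simpa using contDiff_const, by simp, ?_⟩
    intro i z
    obtain rfl : i = 0 := Subsingleton.elim _ _
    have hz : ∀ w, fderiv ℝ (fun w => F w 0) w = 0 := by
      intro w
      have h := hdiv w
      simp only [Fin.sum_univ_one, pd] at h
      ext v
      have hv : v = v 0 • (Pi.single 0 1 : Fin 1 → ℝ) := by
        ext k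
        obtain rfl : k = 0 := Subsingleton.elim _ _
        simp
      rw [hv, map_smul, h]
      simp
    have hconst : (fun w => F w 0) = fun _ => F z 0 := by
      funext w
      exact is_const_of_fderiv_eq_zero ((hF 0).differentiable (by simp)) hz w z
    have h := hInt 0
    rw [hconst, integrable_const_iff] at h
    rcases h with h | h
    · simp [h, pd]
    · exfalso
      rw [isFiniteMeasure_iff] at h
      simp at h
  · set B : Fin (n + 2) → (Fin (n + 2) → ℝ) → ℝ := fun i => radial n (fun w => F w i) with hB
    have hBs : ∀ i, ContDiff ℝ (⊤ : ℕ∞) (B i) := fun i => contDiff_radial n _ (hF i)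
    have hp : ∀ j : Fin (n + 2), ContDiff ℝ (⊤ : ℕ∞) (fun z : Fin (n + 2) → ℝ => z j) :=
      fun j => contDiff_apply ℝ ℝ j
    refine ⟨fun z => Matrix.of fun i j => z j * B i z - z i * B j z, ?_, ?_, ?_⟩
    · intro i j
      exact ((hp j).mul (hBs i)).sub ((hp i).mul (hBs j))
    · intro z i j
      simp
    · intro i z
      have hpd : ∀ j, pd j (fun w : Fin (n + 2) → ℝ => w j * B i w - w i * B j w) z
          = (B i z + z j * pd j (B i) z)
            - ((if i = j then B j z else 0) + z i * pd j (B j) z) := by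
        intro j
        have hB' : ∀ k, HasFDerivAt (B k) (fderiv ℝ (B k) z) z := fun k =>
          ((hBs k).differentiable (by simp) z).hasFDerivAt
        have hp' : ∀ k : Fin (n + 2), HasFDerivAt (fun w : Fin (n + 2) → ℝ => w k)
            (ContinuousLinearMap.proj (R := ℝ) k) z := fun k => hasFDerivAt_apply k z
        have h := (((hp' j).mul (hB' i)).sub ((hp' i).mul (hB' j))).fderiv
        have h' := congrArg (fun L => L (Pi.single j 1)) h
        refine h'.trans ?_
        simp [pd, Pi.single_apply]
        ring
      have hsum : ∑ j, z j * pd j (B i) z = fderiv ℝ (B i) z z := by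
        have hz := congrArg (fderiv ℝ (B i) z) (Finset.univ_sum_single z)
        rw [← hz, map_sum]
        refine Finset.sum_congr rfl fun j _ => ?_
        have : (Pi.single j (z j) : Fin (n + 2) → ℝ) = z j • Pi.single j 1 := by
          rw [← Pi.single_smul]; simp
        rw [this, map_smul]
        rfl
      have hdivB : ∑ j, pd j (B j) z = 0 := by
        simp only [pd, hB]
        simp_rw [fun j => fderiv_radial n _ (hF j)]
        rw [← intervalIntegral.integral_finsetSum]
        · refine Eq.trans (intervalIntegral.integral_congr (g := fun _ => (0:ℝ)) fun t _ => ?_)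
            intervalIntegral.integral_zero
          have := hdiv (t • z)
          simp only [pd] at this
          simp only [← Finset.mul_sum, this, mul_zero]
        · intro j _
          have hc' : Continuous (fderiv ℝ (fun w => F w j)) :=
            (hF j).continuous_fderiv (by simp)
          exact Continuous.intervalIntegrable (by fun_prop) _ _
      simp only [Matrix.of_apply]
      rw [Finset.sum_congr rfl fun j _ => hpd j]
      rw [Finset.sum_sub_distrib, Finset.sum_add_distrib, Finset.sum_add_distrib,
        ← Finset.mul_sum, hsum, hdivB]
      have he := radial_euler n _ (hF i) z
      change (n + 1 : ℝ) * B i z + fderiv ℝ (B i) z z = F z i at he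
      rw [← he]
      simp
      ring
end

section
/- Let d ≥ 1, let H : ℝ^d → ℝ be smooth and set π(z) = exp(-H(z)). Let D : ℝ^d → (d×d real matrices) be smooth with D(z) symmetric positive semidefinite for every z, and let f : ℝ^d → ℝ^d be a smooth drift. Assume (i) π is a stationary solution of the associated Fokker–Planck equation: for every z, ∑_{i,j=1}^d ∂²/∂z_i∂z_j [D_{ij}(z) π(z)] - ∑_{i=1}^d ∂/∂z_i [f_i(z) π(z)] = 0; and (ii) for each i, the function z ↦ f_i(z) π(z) - ∑_{j=1}^d ∂/∂z_j [D_{ij}(z) π(z)] is Lebesgue integrable on ℝ^d. Then there exists a smooth matrix-valued map Q : ℝ^d → (d×d real matrices) with Q(z) skew-symmetric for every z such that for every i and every z, f_i(z) = -∑_{j=1}^d (D_{ij}(z) + Q_{ij}(z)) ∂H/∂z_j(z) + ∑_{j=1}^d ∂/∂z_j (D_{ij}(z) + Q_{ij}(z)); equivalently, f_i(z) π(z) = ∑_{j=1}^d ∂/∂z_j [ (D_{ij}(z) + Q_{ij}(z)) π(z) ]. -/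
open scoped BigOperators
open Matrix MeasureTheory

open scoped ContDiff Topology in
theorem cr_hasFDerivAt_param {E F : Type} [NormedAddCommGroup E] [NormedSpace ℝ E]
    [FiniteDimensional ℝ E] [NormedAddCommGroup F] [NormedSpace ℝ F] [CompleteSpace F]
    (g : E → ℝ → F) (g' : E → ℝ → E →L[ℝ] F)
    (hg : Continuous (fun p : E × ℝ => g p.1 p.2))
    (hg' : Continuous (fun p : E × ℝ => g' p.1 p.2))
    (h : ∀ x t, HasFDerivAt (fun x => g x t) (g' x t) x) (x : E) :
    HasFDerivAt (fun x => ∫ t in (0:ℝ)..1, g x t) (∫ t in (0:ℝ)..1, g' x t) x := by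
  have : ProperSpace E := FiniteDimensional.proper ℝ E
  obtain ⟨C, hC⟩ := ((isCompact_closedBall x 1).prod
    (isCompact_Icc (a := (0:ℝ)) (b := 1))).exists_bound_of_continuousOn hg'.continuousOn
  have c1 : ∀ y, Continuous (g y) := fun y => hg.comp (by fun_prop : Continuous fun t : ℝ => (y, t))
  have c2 : ∀ y, Continuous (g' y) := fun y => hg'.comp (by fun_prop : Continuous fun t : ℝ => (y, t))
  refine intervalIntegral.hasFDerivAt_integral_of_dominated_of_fderiv_le (bound := fun _ => C)
    (Metric.closedBall_mem_nhds x one_pos) ?_ ((c1 x).intervalIntegrable _ _) ?_ ?_ ?_ ?_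
  · exact Filter.Eventually.of_forall fun y => (c1 y).aestronglyMeasurable
  · exact (c2 x).aestronglyMeasurable
  · refine Filter.Eventually.of_forall fun t ht y hy => hC (y, t) ⟨hy, ?_⟩
    rw [Set.uIoc_of_le zero_le_one] at ht
    exact ⟨ht.1.le, ht.2⟩
  · exact intervalIntegrable_const
  · exact Filter.Eventually.of_forall fun t _ y _ => h y t

theorem cr_contDiff_param {E : Type} [NormedAddCommGroup E] [NormedSpace ℝ E]
    [FiniteDimensional ℝ E] (n : ℕ) : ∀ {F : Type} [NormedAddCommGroup F] [NormedSpace ℝ F]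
    [CompleteSpace F] (g : E → ℝ → F)
    (_ : ContDiff ℝ (⊤ : ℕ∞) (fun p : E × ℝ => g p.1 p.2)),
    ContDiff ℝ n (fun x => ∫ t in (0:ℝ)..1, g x t) := by
  have key : ∀ {F : Type} [NormedAddCommGroup F] [NormedSpace ℝ F]
    [CompleteSpace F] (g : E → ℝ → F)
    (_ : ContDiff ℝ (⊤ : ℕ∞) (fun p : E × ℝ => g p.1 p.2)),
    ContDiff ℝ (⊤ : ℕ∞) (fun p : E × ℝ => fderiv ℝ (fun x => g x p.2) p.1) := by
    intro F _ _ _ g hg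
    refine ContDiff.fderiv (m := (⊤ : ℕ∞)) (n := (⊤ : ℕ∞)) (f := fun (p : E × ℝ) x => g x p.2) ?_ contDiff_fst (by simp)
    exact hg.comp (by fun_prop : ContDiff ℝ (⊤ : ℕ∞) fun q : (E × ℝ) × E => (q.2, q.1.2))
  have hd : ∀ {F : Type} [NormedAddCommGroup F] [NormedSpace ℝ F]
    [CompleteSpace F] (g : E → ℝ → F)
    (_ : ContDiff ℝ (⊤ : ℕ∞) (fun p : E × ℝ => g p.1 p.2)) (x : E),
    HasFDerivAt (fun x => ∫ t in (0:ℝ)..1, g x t)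
      (∫ t in (0:ℝ)..1, fderiv ℝ (fun x => g x t) x) x := by
    intro F _ _ _ g hg x
    refine cr_hasFDerivAt_param g (fun x t => fderiv ℝ (fun x => g x t) x) hg.continuous
      (key g hg).continuous (fun y t => ?_) x
    have : ContDiff ℝ (⊤ : ℕ∞) (fun x => g x t) :=
      hg.comp (by fun_prop : ContDiff ℝ (⊤ : ℕ∞) fun q : E => (q, t))
    exact (this.differentiable (by simp) y).hasFDerivAt
  induction n with
  | zero =>
    intro F _ _ _ g hg
    exact contDiff_zero.2 (continuous_iff_continuousAt.2 fun x => (hd g hg x).continuousAt)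
  | succ n ih =>
    intro F _ _ _ g hg
    exact contDiff_succ_iff_hasFDerivAt.2 ⟨_, ih _ (key g hg), hd g hg⟩

theorem cr_smooth_param {E : Type} [NormedAddCommGroup E] [NormedSpace ℝ E]
    [FiniteDimensional ℝ E] (g : E → ℝ → ℝ)
    (hg : ContDiff ℝ (⊤ : ℕ∞) (fun p : E × ℝ => g p.1 p.2)) :
    ContDiff ℝ (⊤ : ℕ∞) (fun x => ∫ t in (0:ℝ)..1, g x t) :=
  contDiff_infty.2 fun n => cr_contDiff_param n g hg

theorem cr_pd_smooth {d : ℕ} (i : Fin d) {g : (Fin d → ℝ) → ℝ} (hg : ContDiff ℝ (⊤ : ℕ∞) g) :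
    ContDiff ℝ (⊤ : ℕ∞) (fun z => pd i g z) := by
  unfold pd
  exact (hg.fderiv_right (by simp)).clm_apply contDiff_const

theorem cr_pd_sub {d : ℕ} (i : Fin d) {g h : (Fin d → ℝ) → ℝ} (hg : ContDiff ℝ (⊤ : ℕ∞) g)
    (hh : ContDiff ℝ (⊤ : ℕ∞) h) (z) : pd i (fun w => g w - h w) z = pd i g z - pd i h z := by
  unfold pd
  rw [fderiv_fun_sub (hg.differentiable (by simp) z) (hh.differentiable (by simp) z)]; rfl

theorem cr_pd_add {d : ℕ} (i : Fin d) {g h : (Fin d → ℝ) → ℝ} (hg : ContDiff ℝ (⊤ : ℕ∞) g)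
    (hh : ContDiff ℝ (⊤ : ℕ∞) h) (z) : pd i (fun w => g w + h w) z = pd i g z + pd i h z := by
  unfold pd
  rw [fderiv_fun_add (hg.differentiable (by simp) z) (hh.differentiable (by simp) z)]; rfl

theorem cr_pd_mul {d : ℕ} (i : Fin d) {g h : (Fin d → ℝ) → ℝ} (hg : ContDiff ℝ (⊤ : ℕ∞) g)
    (hh : ContDiff ℝ (⊤ : ℕ∞) h) (z) :
    pd i (fun w => g w * h w) z = g z * pd i h z + h z * pd i g z := by
  unfold pd
  rw [fderiv_fun_mul (hg.differentiable (by simp) z) (hh.differentiable (by simp) z)]; rfl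

theorem cr_pd_sum {d : ℕ} (i : Fin d) {g : Fin d → (Fin d → ℝ) → ℝ}
    (hg : ∀ j, ContDiff ℝ (⊤ : ℕ∞) (g j)) (z) :
    pd i (fun w => ∑ j, g j w) z = ∑ j, pd i (g j) z := by
  unfold pd
  rw [fderiv_fun_sum (fun j _ => (hg j).differentiable (by simp) z)]
  simp

theorem cr_pd_coord {d : ℕ} (i j : Fin d) (z) :
    pd i (fun w : Fin d → ℝ => w j) z = if j = i then 1 else 0 := by
  unfold pd
  have : HasFDerivAt (fun w : Fin d → ℝ => w j) (ContinuousLinearMap.proj (R := ℝ) (φ := fun _ : Fin d => ℝ) j) z :=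
    (ContinuousLinearMap.proj (R := ℝ) (φ := fun _ : Fin d => ℝ) j).hasFDerivAt
  rw [this.fderiv]
  simp [Pi.single_apply]

theorem cr_fderiv_apply {d : ℕ} (g : (Fin d → ℝ) → ℝ) (w z : Fin d → ℝ) :
    fderiv ℝ g w z = ∑ j, z j * pd j g w := by
  unfold pd
  conv_lhs => rw [pi_eq_sum_univ' z]
  simp [map_sum]

/-- The divergence form of the Poincare lemma in dimension at least two. -/
theorem cr_poincare {n : ℕ} (J : Fin (n+2) → (Fin (n+2) → ℝ) → ℝ)
    (hJ : ∀ i, ContDiff ℝ (⊤ : ℕ∞) (J i)) (hdiv : ∀ z, ∑ i, pd i (J i) z = 0) :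
    ∃ A : Fin (n+2) → Fin (n+2) → (Fin (n+2) → ℝ) → ℝ,
      (∀ i j, ContDiff ℝ (⊤ : ℕ∞) (A i j)) ∧ (∀ i j z, A j i z = - A i j z) ∧
      ∀ i z, ∑ j, pd j (A i j) z = J i z := by
  let B : Fin (n+2) → (Fin (n+2) → ℝ) → ℝ := fun i z => ∫ t in (0:ℝ)..1, t ^ n * J i (t • z)
  have hBs : ∀ i, ContDiff ℝ (⊤ : ℕ∞) (B i) := by
    intro i
    refine cr_smooth_param (fun z t => t ^ n * J i (t • z)) ?_
    exact (contDiff_snd.pow n).mul ((hJ i).comp (contDiff_snd.smul contDiff_fst))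
  have hF : ∀ i, Continuous (fderiv ℝ (J i)) := fun i => (hJ i).continuous_fderiv (by simp)
  have hBd : ∀ i z, HasFDerivAt (B i)
      (∫ t in (0:ℝ)..1, t ^ (n+1) • fderiv ℝ (J i) (t • z)) z := by
    intro i z
    refine cr_hasFDerivAt_param (fun z t => t ^ n * J i (t • z))
      (fun z t => t ^ (n+1) • fderiv ℝ (J i) (t • z)) ?_ ?_ ?_ z
    · exact (continuous_snd.pow n).mul ((hJ i).continuous.comp (continuous_snd.smul continuous_fst))
    · exact (continuous_snd.pow _).smul ((hF i).comp (continuous_snd.smul continuous_fst))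
    · intro x t
      have h1 : HasFDerivAt (fun x : Fin (n+2) → ℝ => t • x)
        (t • ContinuousLinearMap.id ℝ (Fin (n+2) → ℝ)) x := (hasFDerivAt_id x).const_smul t
      have h2 := (((hJ i).differentiable (by simp) (t • x)).hasFDerivAt.comp x h1).const_mul (t ^ n)
      refine h2.congr_fderiv ?_
      ext v
      simp [pow_succ, mul_assoc]
  have hBa : ∀ i z v, fderiv ℝ (B i) z v
      = ∫ t in (0:ℝ)..1, t ^ (n+1) * fderiv ℝ (J i) (t • z) v := by
    intro i z v
    rw [(hBd i z).fderiv, ContinuousLinearMap.intervalIntegral_apply]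
    · rfl
    · apply Continuous.intervalIntegrable
      exact (continuous_id.pow _).smul ((hF i).comp (continuous_id.smul continuous_const))
  have hdivB : ∀ z, ∑ j, pd j (B j) z = 0 := by
    intro z
    unfold pd
    simp_rw [hBa]
    rw [← intervalIntegral.integral_finsetSum]
    · have : ∀ t : ℝ, ∑ i, t ^ (n+1) * fderiv ℝ (J i) (t • z) (Pi.single i 1) = 0 := by
        intro t
        rw [← Finset.mul_sum]
        have := hdiv (t • z)
        unfold pd at this
        rw [this, mul_zero]
      simp [this]
    · intro i _
      apply Continuous.intervalIntegrable
      exact (continuous_id.pow _).mul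
        (((hF i).comp (continuous_id.smul continuous_const)).clm_apply continuous_const)
  have hEuler : ∀ i z, fderiv ℝ (B i) z z + (n+1) * B i z = J i z := by
    intro i z
    rw [hBa]
    have cJ : Continuous fun t : ℝ => J i (t • z) :=
      (hJ i).continuous.comp (continuous_id.smul continuous_const)
    have cF : Continuous fun t : ℝ => fderiv ℝ (J i) (t • z) z :=
      ((hF i).comp (continuous_id.smul continuous_const)).clm_apply continuous_const
    have : ∀ t ∈ Set.uIcc (0:ℝ) 1, HasDerivAt (fun t : ℝ => t ^ (n+1) * J i (t • z))
        (t ^ (n+1) * fderiv ℝ (J i) (t • z) z + (n+1) * (t ^ n * J i (t • z))) t := by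
      intro t _
      have h1 : HasDerivAt (fun t : ℝ => t • z) z t := by
        simpa using (hasDerivAt_id t).smul_const z
      have h2 := ((hJ i).differentiable (by simp) (t • z)).hasFDerivAt.comp_hasDerivAt t h1
      have h3 := (hasDerivAt_pow (n+1) t).mul h2
      refine h3.congr_deriv ?_
      simp
      ring
    have h := intervalIntegral.integral_eq_sub_of_hasDerivAt this
      (Continuous.intervalIntegrable (by fun_prop) _ _)
    rw [intervalIntegral.integral_add (Continuous.intervalIntegrable (by fun_prop) _ _)
      (Continuous.intervalIntegrable (by fun_prop) _ _), intervalIntegral.integral_const_mul] at h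
    simpa using h
  have hc : ∀ j : Fin (n+2), ContDiff ℝ (⊤ : ℕ∞) (fun z : Fin (n+2) → ℝ => z j) :=
    fun j => contDiff_apply ℝ ℝ j
  refine ⟨fun i j z => B i z * z j - B j z * z i,
    fun i j => ((hBs i).mul (hc j)).sub ((hBs j).mul (hc i)), fun i j z => by ring, ?_⟩
  intro i z
  have : ∀ j, pd j (fun z => B i z * z j - B j z * z i) z
      = (z j * pd j (B i) z + B i z) - (z i * pd j (B j) z + if i = j then B j z else 0) := by
    intro j
    rw [cr_pd_sub j ((hBs i).mul (hc j)) ((hBs j).mul (hc i)), cr_pd_mul j (hBs i) (hc j),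
      cr_pd_mul j (hBs j) (hc i), cr_pd_coord, cr_pd_coord]
    split_ifs <;> simp_all <;> ring
  simp_rw [this]
  rw [Finset.sum_sub_distrib, Finset.sum_add_distrib, Finset.sum_add_distrib, ← Finset.mul_sum,
    hdivB, ← cr_fderiv_apply, ← hEuler i z]
  simp
  ring

theorem cr_dim_one (J : Fin 1 → (Fin 1 → ℝ) → ℝ)
    (hJ : ∀ i, ContDiff ℝ (⊤ : ℕ∞) (J i)) (hdiv : ∀ z, ∑ i, pd i (J i) z = 0)
    (hint : ∀ i, Integrable (J i) (volume : Measure (Fin 1 → ℝ))) (i) (z) : J i z = 0 := by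
  obtain rfl : i = 0 := Subsingleton.elim _ _
  have h0 : ∀ w, fderiv ℝ (J 0) w = 0 := by
    intro w
    ext v
    rw [cr_fderiv_apply]
    have := hdiv w
    simp at this
    simp [this]
  have hc : J 0 = fun _ => J 0 z := by
    ext w
    exact is_const_of_fderiv_eq_zero ((hJ 0).differentiable (by simp)) h0 w z
  have h := hint 0
  rw [hc, integrable_const_iff] at h
  rcases h with h | h
  · exact h
  · exfalso
    have := h.measure_univ_lt_top
    rw [measure_univ_of_isAddLeftInvariant] at this
    exact lt_irrefl _ this

theorem cr_exists {d : ℕ} (hd : 1 ≤ d) (J : Fin d → (Fin d → ℝ) → ℝ)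
    (hJ : ∀ i, ContDiff ℝ (⊤ : ℕ∞) (J i)) (hdiv : ∀ z, ∑ i, pd i (J i) z = 0)
    (hint : ∀ i, Integrable (J i) (volume : Measure (Fin d → ℝ))) :
    ∃ A : Fin d → Fin d → (Fin d → ℝ) → ℝ,
      (∀ i j, ContDiff ℝ (⊤ : ℕ∞) (A i j)) ∧ (∀ i j z, A j i z = - A i j z) ∧
      ∀ i z, ∑ j, pd j (A i j) z = J i z := by
  match d, hd with
  | 1, _ =>
    refine ⟨fun _ _ _ => 0, fun _ _ => contDiff_const, by simp, fun i z => ?_⟩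
    rw [cr_dim_one J hJ hdiv hint]
    simp [pd]
  | n + 2, _ => exact cr_poincare J hJ hdiv

/-- Completeness of the recipe (Theorem 1): any diffusion with stationary density
`π = exp (-H)` and an integrability condition can be written in the complete-recipe
form for some smooth skew-symmetric `Q`. -/
theorem complete_recipe {d : ℕ} (hd : 1 ≤ d)
    (H : (Fin d → ℝ) → ℝ) (hH : ContDiff ℝ (⊤ : ℕ∞) H)
    (D : (Fin d → ℝ) → Matrix (Fin d) (Fin d) ℝ)
    (hD : ∀ i j, ContDiff ℝ (⊤ : ℕ∞) (fun z => D z i j))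
    (hDpsd : ∀ z, (D z).PosSemidef)
    (f : (Fin d → ℝ) → Fin d → ℝ)
    (hf : ∀ i, ContDiff ℝ (⊤ : ℕ∞) (fun z => f z i))
    (hstat : ∀ z : Fin d → ℝ,
      ∑ i, ∑ j, pd i (fun w => pd j (fun u => D u i j * Real.exp (-H u)) w) z
        - ∑ i, pd i (fun w => f w i * Real.exp (-H w)) z = 0)
    (hInt : ∀ i, Integrable
      (fun z => f z i * Real.exp (-H z)
        - ∑ j, pd j (fun w => D w i j * Real.exp (-H w)) z)
      (volume : Measure (Fin d → ℝ))) :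
    ∃ Q : (Fin d → ℝ) → Matrix (Fin d) (Fin d) ℝ,
      (∀ i j, ContDiff ℝ (⊤ : ℕ∞) (fun z => Q z i j)) ∧
      (∀ z, (Q z)ᵀ = -Q z) ∧
      (∀ i (z : Fin d → ℝ), f z i =
        -∑ j, (D z i j + Q z i j) * pd j H z
          + ∑ j, pd j (fun w => D w i j + Q w i j) z) ∧
      (∀ i (z : Fin d → ℝ), f z i * Real.exp (-H z) =
        ∑ j, pd j (fun w => (D w i j + Q w i j) * Real.exp (-H w)) z) := by
  have hE : ContDiff ℝ (⊤ : ℕ∞) (fun z => Real.exp (-H z)) := hH.neg.exp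
  have hDE : ∀ i j, ContDiff ℝ (⊤ : ℕ∞) (fun z => D z i j * Real.exp (-H z)) :=
    fun i j => (hD i j).mul hE
  have hpE : ∀ j z, pd j (fun w => Real.exp (-H w)) z = - pd j H z * Real.exp (-H z) := by
    intro j z
    unfold pd
    have : HasFDerivAt (fun w => Real.exp (-H w)) _ z := (hH.differentiable (by simp) z).hasFDerivAt.neg.exp
    rw [this.fderiv]
    simp
    ring
  have hS : ∀ i, ContDiff ℝ (⊤ : ℕ∞)
      (fun z => ∑ j, pd j (fun w => D w i j * Real.exp (-H w)) z) :=
    fun i => ContDiff.sum fun j _ => cr_pd_smooth j (hDE i j)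
  obtain ⟨A, hA, hAs, hAJ⟩ := cr_exists hd
    (fun i z => f z i * Real.exp (-H z) - ∑ j, pd j (fun w => D w i j * Real.exp (-H w)) z)
    (fun i => ((hf i).mul hE).sub (hS i)) (by
      intro z
      have : ∀ i, pd i (fun z => f z i * Real.exp (-H z)
          - ∑ j, pd j (fun w => D w i j * Real.exp (-H w)) z) z
          = pd i (fun w => f w i * Real.exp (-H w)) z
          - ∑ j, pd i (fun w => pd j (fun u => D u i j * Real.exp (-H u)) w) z := by
        intro i
        rw [cr_pd_sub i ((hf i).mul hE) (hS i), cr_pd_sum i fun j => cr_pd_smooth j (hDE i j)]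
      simp_rw [this]
      rw [Finset.sum_sub_distrib]
      linarith [hstat z]) hInt
  have hQs : ∀ i j, ContDiff ℝ (⊤ : ℕ∞) (fun z => A i j z * Real.exp (H z)) :=
    fun i j => (hA i j).mul hH.exp
  have h4 : ∀ i (z : Fin d → ℝ), f z i * Real.exp (-H z) =
        ∑ j, pd j (fun w => (D w i j + A i j w * Real.exp (H w)) * Real.exp (-H w)) z := by
    intro i z
    have : ∀ j, pd j (fun w => (D w i j + A i j w * Real.exp (H w)) * Real.exp (-H w)) z
        = pd j (fun w => D w i j * Real.exp (-H w)) z + pd j (A i j) z := by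
      intro j
      rw [← cr_pd_add j (hDE i j) (hA i j)]
      congr 1
      ext w
      rw [add_mul, mul_assoc, ← Real.exp_add]
      simp
    simp_rw [this]
    rw [Finset.sum_add_distrib, hAJ]
    ring
  refine ⟨fun z => Matrix.of fun i j => A i j z * Real.exp (H z), hQs, ?_, ?_, h4⟩
  · intro z
    ext i j
    simp [hAs i j]
  · intro i z
    have hne := (Real.exp_pos (-H z)).ne'
    apply mul_right_cancel₀ hne
    rw [h4 i z, add_mul, neg_mul, Finset.sum_mul, Finset.sum_mul, ← Finset.sum_neg_distrib,
      ← Finset.sum_add_distrib]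
    refine Finset.sum_congr rfl fun j _ => ?_
    rw [cr_pd_mul j ((hD i j).add (hQs i j)) hE, hpE]
    simp only [Matrix.of_apply]
    ring
end

section
/- Let d ≥ 1, let U : ℝ^d → ℝ be smooth, and let G : ℝ^d → (d×d real matrices) be smooth with G(θ) symmetric positive definite for every θ; write G(θ)⁻¹ for its inverse (which is a smooth matrix-valued function of θ). Define the Riemannian Langevin drift f_i(θ) = -∑_{j=1}^d (G(θ)⁻¹)_{ij} ∂U/∂θ_j(θ) + ∑_{j=1}^d ∂/∂θ_j (G(θ)⁻¹)_{ij}. Then e^{-U} is a stationary solution of the Fokker–Planck equation with diffusion matrix D = G⁻¹: for every θ ∈ ℝ^d, ∑_{i,j=1}^d ∂²/∂θ_i∂θ_j [(G(θ)⁻¹)_{ij} e^{-U(θ)}] - ∑_{i=1}^d ∂/∂θ_i [f_i(θ) e^{-U(θ)}] = 0. -/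
open scoped BigOperators
open Matrix

theorem contDiff_det_aux {d : ℕ} (G : (Fin d → ℝ) → Matrix (Fin d) (Fin d) ℝ)
    (hG : ∀ i j, ContDiff ℝ (⊤ : ℕ∞) (fun θ => G θ i j)) :
    ContDiff ℝ (⊤ : ℕ∞) (fun θ => (G θ).det) := by
  simp only [Matrix.det_apply']
  exact ContDiff.sum fun σ _ => contDiff_const.mul (contDiff_prod fun i _ => hG _ _)

theorem contDiff_inv_aux {d : ℕ} (G : (Fin d → ℝ) → Matrix (Fin d) (Fin d) ℝ)
    (hG : ∀ i j, ContDiff ℝ (⊤ : ℕ∞) (fun θ => G θ i j))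
    (hGpd : ∀ θ, (G θ).PosDef) (i j : Fin d) :
    ContDiff ℝ (⊤ : ℕ∞) (fun θ => (G θ)⁻¹ i j) := by
  simp only [Matrix.inv_def, Matrix.smul_apply, smul_eq_mul, Ring.inverse_eq_inv',
    Matrix.adjugate_apply]
  refine ((contDiff_det_aux G hG).inv fun θ => (hGpd θ).det_pos.ne').mul ?_
  refine contDiff_det_aux _ fun k l => ?_
  by_cases h : k = j
  · subst h
    simp only [Matrix.updateRow_self]
    exact contDiff_const
  · simp only [Matrix.updateRow_ne h]
    exact hG k l

theorem contDiff_pd_aux {d : ℕ} (j : Fin d) (g : (Fin d → ℝ) → ℝ)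
    (hg : ContDiff ℝ (⊤ : ℕ∞) g) : ContDiff ℝ (⊤ : ℕ∞) (pd j g) := by
  unfold pd
  exact (hg.fderiv_right (m := ((⊤ : ℕ∞) : WithTop ℕ∞)) (by simp)).clm_apply contDiff_const

/-- `e^{-U}` is a stationary solution of the Fokker–Planck equation for Riemannian
Langevin dynamics with diffusion matrix `D = G⁻¹` and the Lebesgue-measure
correction term `Γ_i = ∑_j ∂_j (G⁻¹)_{ij}`. -/
theorem riemannian_langevin_stationary {d : ℕ} (hd : 1 ≤ d)
    (U : (Fin d → ℝ) → ℝ) (hU : ContDiff ℝ (⊤ : ℕ∞) U)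
    (G : (Fin d → ℝ) → Matrix (Fin d) (Fin d) ℝ)
    (hG : ∀ i j, ContDiff ℝ (⊤ : ℕ∞) (fun θ => G θ i j))
    (hGpd : ∀ θ, (G θ).PosDef)
    (f : (Fin d → ℝ) → Fin d → ℝ)
    (hf : ∀ θ i, f θ i =
      -∑ j, (G θ)⁻¹ i j * pd j U θ
        + ∑ j, pd j (fun w => (G w)⁻¹ i j) θ)
    (θ : Fin d → ℝ) :
    ∑ i, ∑ j, pd i (fun w => pd j (fun u => (G u)⁻¹ i j * Real.exp (-U u)) w) θ
      - ∑ i, pd i (fun w => f w i * Real.exp (-U w)) θ = 0 := by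
  have hE : ContDiff ℝ (⊤ : ℕ∞) (fun u => Real.exp (-U u)) := hU.neg.exp
  have hI := contDiff_inv_aux G hG hGpd
  have hne : ((⊤ : ℕ∞) : WithTop ℕ∞) ≠ 0 := by simp
  have key : ∀ i w, f w i * Real.exp (-U w)
      = ∑ j, pd j (fun u => (G u)⁻¹ i j * Real.exp (-U u)) w := by
    intro i w
    have h1 : ∀ j, pd j (fun u => (G u)⁻¹ i j * Real.exp (-U u)) w
        = (-((G w)⁻¹ i j * pd j U w) + pd j (fun u => (G u)⁻¹ i j) w) * Real.exp (-U w) := by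
      intro j
      have hA := ((hI i j).differentiable hne w).hasFDerivAt
      have hB := ((hU.differentiable hne w).hasFDerivAt).neg.exp
      have hC := (hA.mul hB).fderiv
      unfold pd
      erw [hC]
      simp
      ring
    rw [hf, Finset.sum_congr rfl fun j _ => h1 j, ← Finset.sum_mul, Finset.sum_add_distrib,
      Finset.sum_neg_distrib]
  rw [sub_eq_zero]
  refine Finset.sum_congr rfl fun i _ => ?_
  simp only [key]
  have hd : ∀ j ∈ Finset.univ, DifferentiableAt ℝ
      (fun w => pd j (fun u => (G u)⁻¹ i j * Real.exp (-U u)) w) θ := fun j _ =>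
    (contDiff_pd_aux j _ ((hI i j).mul hE)).differentiable hne θ
  have hs := fderiv_fun_sum hd
  conv_rhs => unfold pd
  erw [hs]
  simp [pd]
end
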